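/- If a Kenmotsu manifold of dimension 2n+1 admits a *-Ricci soliton with potential vector field V, then the Lie derivative of the Ricci tensor satisfies (£_V S)(X, ξ) = -X(r) + ξ(r)η(X) for all vector fields X, where r is the scalar curvature. -/

import Mathlib

/-- An abstract algebraic model of a `(2n+1)`-dimensional Kenmotsu manifold:
`C` plays the role of the ring of smooth functions on the manifold and vector
fields are modelled as `ℝ`-derivations of `C`.  A global orthonormal frame `e`
is included in order to express traces (Ricci tensor, scalar curvature). -/
structure KenmotsuManifold (n : ℕ) (C : Type*) [CommRing C] [Algebra ℝ C] where
  /-- the Riemannian metric -/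
  g : Derivation ℝ C C → Derivation ℝ C C → C
  /-- the structure `(1,1)`-tensor field -/
  φ : Derivation ℝ C C → Derivation ℝ C C
  /-- the Reeb (characteristic) vector field -/
  ξ : Derivation ℝ C C
  /-- the contact `1`-form -/
  η : Derivation ℝ C C → C
  /-- the Levi-Civita connection -/
  nabla : Derivation ℝ C C → Derivation ℝ C C → Derivation ℝ C C
  /-- a global orthonormal frame, used to take traces -/
  e : Fin (2 * n + 1) → Derivation ℝ C C
  g_symm : ∀ X Y, g X Y = g Y X
  g_add_left : ∀ X Y Z, g (X + Y) Z = g X Z + g Y Z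
  g_smul_left : ∀ (f : C) (X Y), g (f • X) Y = f * g X Y
  g_nondeg : ∀ X, (∀ Y, g X Y = 0) → X = 0
  g_frame : ∀ i j, g (e i) (e j) = if i = j then 1 else 0
  frame_span : ∀ X : Derivation ℝ C C, X = ∑ i, g X (e i) • e i
  phi_phi : ∀ X, φ (φ X) = -X + η X • ξ
  phi_linear : ∀ (f : C) (X Y), φ (f • X + Y) = f • φ X + φ Y
  eta_xi : η ξ = 1
  eta_def : ∀ X, η X = g X ξ
  compat_phi : ∀ X Y, g (φ X) (φ Y) = g X Y - η X * η Y
  nabla_add_left : ∀ X Y Z, nabla (X + Y) Z = nabla X Z + nabla Y Z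
  nabla_smul_left : ∀ (f : C) (X Y), nabla (f • X) Y = f • nabla X Y
  nabla_add_right : ∀ X Y Z, nabla X (Y + Z) = nabla X Y + nabla X Z
  nabla_leibniz : ∀ (X) (f : C) (Y), nabla X (f • Y) = X f • Y + f • nabla X Y
  torsion_free : ∀ X Y, nabla X Y - nabla Y X = ⁅X, Y⁆
  metric_compat : ∀ X Y Z, X (g Y Z) = g (nabla X Y) Z + g Y (nabla X Z)
  /-- the Kenmotsu condition `(∇_X φ)Y = g(φX,Y)ξ - η(Y)φX` -/
  kenmotsu : ∀ X Y, nabla X (φ Y) - φ (nabla X Y) = g (φ X) Y • ξ - η Y • φ X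

namespace KenmotsuManifold

variable {n : ℕ} {C : Type*} [CommRing C] [Algebra ℝ C] (K : KenmotsuManifold n C)

/-- the Riemann curvature tensor `R(X,Y)Z = ∇_X∇_Y Z - ∇_Y∇_X Z - ∇_{[X,Y]}Z` -/
def Rm (X Y Z : Derivation ℝ C C) : Derivation ℝ C C :=
  K.nabla X (K.nabla Y Z) - K.nabla Y (K.nabla X Z) - K.nabla ⁅X, Y⁆ Z

/-- the Ricci tensor `S(X,Y) = trace (Z ↦ R(Z,X)Y)` -/
def S (X Y : Derivation ℝ C C) : C := ∑ i, K.g (K.Rm (K.e i) X Y) (K.e i)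

/-- the Ricci operator `Q`, `g(QX,Y) = S(X,Y)` -/
def Q (X : Derivation ℝ C C) : Derivation ℝ C C := ∑ i, K.S X (K.e i) • K.e i

/-- the scalar curvature `r` -/
def r : C := ∑ i, K.S (K.e i) (K.e i)

/-- the `*`-Ricci tensor `S*(X,Y) = (1/2) trace (Z ↦ R(X,φY)φZ)` -/
noncomputable def Sstar (X Y : Derivation ℝ C C) : C :=
  (2 : ℝ)⁻¹ • ∑ i, K.g (K.Rm X (K.φ Y) (K.φ (K.e i))) (K.e i)

/-- the covariant derivative `(∇_X Q)Y` of the Ricci operator -/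
def nablaQ (X Y : Derivation ℝ C C) : Derivation ℝ C C :=
  K.nabla X (K.Q Y) - K.Q (K.nabla X Y)

/-- the Lie derivative `(£_V g)(X,Y)` of the metric -/
def lieG (V X Y : Derivation ℝ C C) : C :=
  V (K.g X Y) - K.g ⁅V, X⁆ Y - K.g X ⁅V, Y⁆

/-- the Lie derivative `(£_V S)(X,Y)` of the Ricci tensor -/
def lieS (V X Y : Derivation ℝ C C) : C :=
  V (K.S X Y) - K.S ⁅V, X⁆ Y - K.S X ⁅V, Y⁆

/-- `g` is a `*`-Ricci soliton with potential vector field `V` and soliton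
constant `l`: `£_V g + 2S* + 2l g = 0`. -/
def IsStarRicciSoliton (V : Derivation ℝ C C) (l : ℝ) : Prop :=
  ∀ X Y, K.lieG V X Y + 2 * K.Sstar X Y + (2 * l) • K.g X Y = 0

/-- `g` is a gradient almost `*`-Ricci soliton with potential function `f`
(with gradient `F`, i.e. `g(F,X) = Xf`) and soliton function `l`:
`Hess f + S* + l g = 0`. -/
def IsGradAlmostStarRicciSoliton (f : C) (F : Derivation ℝ C C) (l : C) : Prop :=
  (∀ X, K.g F X = X f) ∧ ∀ X Y, K.g (K.nabla X F) Y + K.Sstar X Y + l * K.g X Y = 0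

/-- `M` is `η`-Einstein: `S = α g + β η⊗η`. -/
def IsEtaEinstein : Prop :=
  ∃ α β : C, ∀ X Y, K.S X Y = α * K.g X Y + β * (K.η X * K.η Y)

end KenmotsuManifold

namespace KenmotsuManifold

section helpers

variable {n : ℕ} {C : Type*} [CommRing C] [Algebra ℝ C] (K : KenmotsuManifold n C)

lemma g_add_right (X Y Z : Derivation ℝ C C) : K.g X (Y + Z) = K.g X Y + K.g X Z := by
  rw [K.g_symm, K.g_add_left, K.g_symm Y, K.g_symm Z]

lemma g_smul_right (f : C) (X Y : Derivation ℝ C C) : K.g X (f • Y) = f * K.g X Y := by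
  rw [K.g_symm, K.g_smul_left, K.g_symm Y]

lemma g_zero_left (Y : Derivation ℝ C C) : K.g 0 Y = 0 := by
  have := K.g_smul_left 0 0 Y
  simpa using this

lemma g_zero_right (Y : Derivation ℝ C C) : K.g Y 0 = 0 := by
  rw [K.g_symm, g_zero_left]

lemma g_neg_left (X Y : Derivation ℝ C C) : K.g (-X) Y = - K.g X Y := by
  have := K.g_smul_left (-1) X Y
  simpa using this

lemma g_neg_right (X Y : Derivation ℝ C C) : K.g X (-Y) = - K.g X Y := by
  rw [K.g_symm, g_neg_left, K.g_symm Y]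

lemma g_sub_left (X Y Z : Derivation ℝ C C) : K.g (X - Y) Z = K.g X Z - K.g Y Z := by
  rw [sub_eq_add_neg, K.g_add_left, g_neg_left, sub_eq_add_neg]

lemma g_sub_right (X Y Z : Derivation ℝ C C) : K.g X (Y - Z) = K.g X Y - K.g X Z := by
  rw [K.g_symm, g_sub_left, K.g_symm Y, K.g_symm Z]

lemma nabla_zero_right (X : Derivation ℝ C C) : K.nabla X 0 = 0 := by
  have := K.nabla_leibniz X 0 0
  simpa using this

lemma nabla_neg_right (X Y : Derivation ℝ C C) : K.nabla X (-Y) = - K.nabla X Y := by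
  have := K.nabla_add_right X Y (-Y)
  rw [add_neg_cancel, nabla_zero_right] at this
  exact (neg_eq_of_add_eq_zero_right this.symm).symm

lemma nabla_sub_right (X Y Z : Derivation ℝ C C) :
    K.nabla X (Y - Z) = K.nabla X Y - K.nabla X Z := by
  rw [sub_eq_add_neg, K.nabla_add_right, nabla_neg_right, sub_eq_add_neg]

lemma nabla_zero_left (X : Derivation ℝ C C) : K.nabla 0 X = 0 := by
  have := K.nabla_smul_left 0 0 X
  simpa using this

lemma nabla_neg_left (X Y : Derivation ℝ C C) : K.nabla (-X) Y = - K.nabla X Y := by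
  have := K.nabla_smul_left (-1) X Y
  simpa using this

lemma nabla_sub_left (X Y Z : Derivation ℝ C C) :
    K.nabla (X - Y) Z = K.nabla X Z - K.nabla Y Z := by
  rw [sub_eq_add_neg, K.nabla_add_left, nabla_neg_left, sub_eq_add_neg]

lemma phi_zero : K.φ 0 = 0 := by
  have := K.phi_linear (-1) 0 0
  simpa using this

lemma phi_add (X Y : Derivation ℝ C C) : K.φ (X + Y) = K.φ X + K.φ Y := by
  have := K.phi_linear 1 X Y
  simpa using this

lemma phi_smul (f : C) (X : Derivation ℝ C C) : K.φ (f • X) = f • K.φ X := by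
  have := K.phi_linear f X 0
  simpa [phi_zero] using this

lemma phi_neg (X : Derivation ℝ C C) : K.φ (-X) = - K.φ X := by
  have := K.phi_smul (-1) X
  simpa using this

lemma phi_sub (X Y : Derivation ℝ C C) : K.φ (X - Y) = K.φ X - K.φ Y := by
  rw [sub_eq_add_neg, phi_add, phi_neg, sub_eq_add_neg]

/-- cancellation of a factor two -/
lemma two_cancel {a b : C} (h : 2 * a = 2 * b) : a = b := by
  have h2 : algebraMap ℝ C (1/2) * 2 = 1 := by
    rw [← map_ofNat (algebraMap ℝ C) 2, ← map_mul]; norm_num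
  linear_combination algebraMap ℝ C (1/2) * h - (a - b) * h2

/-! ### curvature -/

/-- the curvature `(0,4)`-tensor -/
def R4 (X Y Z W : Derivation ℝ C C) : C := K.g (K.Rm X Y Z) W

lemma Rm_antisymm (X Y Z : Derivation ℝ C C) : K.Rm X Y Z = - K.Rm Y X Z := by
  unfold Rm
  rw [← lie_skew X Y, nabla_neg_left]
  abel

lemma Rm_add_left (X X' Y Z : Derivation ℝ C C) :
    K.Rm (X + X') Y Z = K.Rm X Y Z + K.Rm X' Y Z := by
  unfold Rm
  rw [add_lie, K.nabla_add_left, K.nabla_add_left, K.nabla_add_left, K.nabla_add_right]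
  abel

lemma smul_lie' (f : C) (X Y : Derivation ℝ C C) :
    ⁅f • X, Y⁆ = f • ⁅X, Y⁆ - Y f • X := by
  ext a
  simp [Derivation.commutator_apply]
  ring

lemma Rm_smul_left (f : C) (X Y Z : Derivation ℝ C C) :
    K.Rm (f • X) Y Z = f • K.Rm X Y Z := by
  unfold Rm
  rw [smul_lie', nabla_sub_left, K.nabla_smul_left, K.nabla_smul_left, K.nabla_smul_left,
    K.nabla_smul_left, K.nabla_leibniz, smul_sub, smul_sub]
  abel

lemma Rm_add_right (X Y Z Z' : Derivation ℝ C C) :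
    K.Rm X Y (Z + Z') = K.Rm X Y Z + K.Rm X Y Z' := by
  unfold Rm
  simp only [K.nabla_add_right]
  abel

lemma Rm_smul_right (f : C) (X Y Z : Derivation ℝ C C) :
    K.Rm X Y (f • Z) = f • K.Rm X Y Z := by
  unfold Rm
  simp only [K.nabla_leibniz, K.nabla_add_right]
  ext a
  simp [Derivation.commutator_apply]
  ring

lemma bianchi1 (X Y Z : Derivation ℝ C C) : K.Rm X Y Z + K.Rm Y Z X + K.Rm Z X Y = 0 := by
  unfold Rm
  have jac := lie_jacobi X Y Z
  have h1 : ∀ A B, K.nabla A B = K.nabla B A + ⁅A, B⁆ := fun A B => by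
    rw [← K.torsion_free A B]; abel
  rw [h1 X Y, h1 Y Z, h1 Z X, K.nabla_add_right, K.nabla_add_right, K.nabla_add_right,
    h1 X ⁅Y, Z⁆, h1 Y ⁅Z, X⁆, h1 Z ⁅X, Y⁆]
  calc _ = ⁅X, ⁅Y, Z⁆⁆ + ⁅Y, ⁅Z, X⁆⁆ + ⁅Z, ⁅X, Y⁆⁆ := by abel
    _ = 0 := jac

lemma R4_12 (X Y Z W : Derivation ℝ C C) : K.R4 X Y Z W = - K.R4 Y X Z W := by
  unfold R4; rw [Rm_antisymm, g_neg_left]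

lemma R4_34 (X Y Z W : Derivation ℝ C C) : K.R4 X Y Z W = - K.R4 X Y W Z := by
  unfold R4 Rm
  simp only [g_sub_left]
  have e1 := K.metric_compat X (K.nabla Y Z) W
  have e2 := K.metric_compat Y (K.nabla X Z) W
  have e3 := K.metric_compat X (K.nabla Y W) Z
  have e4 := K.metric_compat Y (K.nabla X W) Z
  have e5 := K.metric_compat ⁅X, Y⁆ Z W
  have e6 := congrArg X (K.metric_compat Y Z W)
  have e7 := congrArg Y (K.metric_compat X Z W)
  simp only [map_add] at e6 e7
  rw [Derivation.commutator_apply] at e5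
  rw [K.g_symm Z (K.nabla Y W)] at e6
  rw [K.g_symm Z (K.nabla X W)] at e7
  rw [K.g_symm Z (K.nabla ⁅X, Y⁆ W)] at e5
  rw [K.g_symm (K.nabla Y W) (K.nabla X Z)] at e3
  rw [K.g_symm (K.nabla X W) (K.nabla Y Z)] at e4
  linear_combination -e6 + e7 - e1 + e2 - e3 + e4 + e5

lemma R4_b (X Y Z W : Derivation ℝ C C) : K.R4 X Y Z W + K.R4 Y Z X W + K.R4 Z X Y W = 0 := by
  unfold R4; rw [← K.g_add_left, ← K.g_add_left, bianchi1, g_zero_left]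

lemma R4_pair (X Y Z W : Derivation ℝ C C) : K.R4 X Y Z W = K.R4 Z W X Y := by
  apply two_cancel
  linear_combination K.R4_b X Y Z W + K.R4_b Y Z W X - K.R4_b Z W X Y - K.R4_b W X Y Z
    - K.R4_34 Y Z W X - K.R4_34 Z W Y X - K.R4_12 W Y Z X
    + K.R4_12 W X Z Y - K.R4_34 X W Z Y + K.R4_12 X Z W Y - K.R4_34 Z X W Y
    + K.R4_12 W X Y Z + K.R4_34 X Y W Z + K.R4_34 Y W X Z

/-! ### frames and traces -/

lemma frame_lin (F : Derivation ℝ C C → C) (ha : ∀ X Y, F (X + Y) = F X + F Y)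
    (hs : ∀ (f : C) X, F (f • X) = f * F X) (X : Derivation ℝ C C) :
    ∑ i, K.g X (K.e i) * F (K.e i) = F X := by
  let L : Derivation ℝ C C →ₗ[C] C :=
    { toFun := F, map_add' := ha, map_smul' := fun f X => by simp [hs] }
  have h : L X = L (∑ i, K.g X (K.e i) • K.e i) := congrArg L (K.frame_span X)
  rw [map_sum] at h
  simp only [map_smul, smul_eq_mul] at h
  exact h.symm

lemma frame_gg (X Y : Derivation ℝ C C) :
    ∑ i, K.g X (K.e i) * K.g Y (K.e i) = K.g X Y := by
  rw [K.g_symm X Y]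
  exact K.frame_lin (fun Z => K.g Y Z) (K.g_add_right Y) (fun f Z => K.g_smul_right f Y Z) X

lemma frame_dim : ∑ i, K.g (K.e i) (K.e i) = 2 * (n : C) + 1 := by
  simp [K.g_frame]

lemma trace_skew (β : Derivation ℝ C C → Derivation ℝ C C → C)
    (h1 : ∀ X Y Z, β (X + Y) Z = β X Z + β Y Z) (h2 : ∀ (f : C) X Z, β (f • X) Z = f * β X Z)
    (h3 : ∀ Z X Y, β Z (X + Y) = β Z X + β Z Y) (h4 : ∀ (f : C) Z X, β Z (f • X) = f * β Z X)
    (A : Fin (2 * n + 1) → Derivation ℝ C C)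
    (e3 : ∀ i j, K.g (A i) (K.e j) + K.g (A j) (K.e i) = 0) :
    ∑ i, (β (A i) (K.e i) + β (K.e i) (A i)) = 0 := by
  have e1 : ∀ i, β (A i) (K.e i)
      = ∑ j, K.g (A i) (K.e j) * β (K.e j) (K.e i) := fun i =>
    (K.frame_lin (fun Z => β Z (K.e i)) (fun _ _ => h1 _ _ _) (fun _ _ => h2 _ _ _) _).symm
  have e2 : ∀ i, β (K.e i) (A i)
      = ∑ j, K.g (A i) (K.e j) * β (K.e i) (K.e j) := fun i =>
    (K.frame_lin (fun Z => β (K.e i) Z) (fun _ _ => h3 _ _ _) (fun _ _ => h4 _ _ _) _).symm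
  rw [Finset.sum_add_distrib, Finset.sum_congr rfl (fun i _ => e1 i),
    Finset.sum_congr rfl (fun i _ => e2 i)]
  rw [Finset.sum_comm (f := fun i j => K.g (A i) (K.e j) * β (K.e i) (K.e j)),
    ← Finset.sum_add_distrib]
  apply Finset.sum_eq_zero
  intro i _
  rw [← Finset.sum_add_distrib]
  apply Finset.sum_eq_zero
  intro j _
  rw [← add_mul, e3, zero_mul]

lemma trace_nabla (β : Derivation ℝ C C → Derivation ℝ C C → C)
    (h1 : ∀ X Y Z, β (X + Y) Z = β X Z + β Y Z) (h2 : ∀ (f : C) X Z, β (f • X) Z = f * β X Z)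
    (h3 : ∀ Z X Y, β Z (X + Y) = β Z X + β Z Y) (h4 : ∀ (f : C) Z X, β Z (f • X) = f * β Z X)
    (X : Derivation ℝ C C) :
    ∑ i, (β (K.nabla X (K.e i)) (K.e i) + β (K.e i) (K.nabla X (K.e i))) = 0 := by
  refine K.trace_skew β h1 h2 h3 h4 (fun i => K.nabla X (K.e i)) ?_
  intro i j
  have := K.metric_compat X (K.e i) (K.e j)
  rw [K.g_symm (K.nabla X (K.e j)), ← this, K.g_frame]
  split_ifs <;> simp

lemma R4_add1 (X X' Y Z W : Derivation ℝ C C) :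
    K.R4 (X + X') Y Z W = K.R4 X Y Z W + K.R4 X' Y Z W := by
  unfold R4; rw [Rm_add_left, K.g_add_left]

lemma R4_smul1 (f : C) (X Y Z W : Derivation ℝ C C) :
    K.R4 (f • X) Y Z W = f * K.R4 X Y Z W := by
  unfold R4; rw [Rm_smul_left, K.g_smul_left]

lemma R4_add2 (X Y Y' Z W : Derivation ℝ C C) :
    K.R4 X (Y + Y') Z W = K.R4 X Y Z W + K.R4 X Y' Z W := by
  rw [R4_12, R4_add1, R4_12 K Y, R4_12 K Y']; ring

lemma R4_smul2 (f : C) (X Y Z W : Derivation ℝ C C) :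
    K.R4 X (f • Y) Z W = f * K.R4 X Y Z W := by
  rw [R4_12, R4_smul1, R4_12 K Y]; ring

lemma R4_add3 (X Y Z Z' W : Derivation ℝ C C) :
    K.R4 X Y (Z + Z') W = K.R4 X Y Z W + K.R4 X Y Z' W := by
  unfold R4; rw [Rm_add_right, K.g_add_left]

lemma R4_smul3 (f : C) (X Y Z W : Derivation ℝ C C) :
    K.R4 X Y (f • Z) W = f * K.R4 X Y Z W := by
  unfold R4; rw [Rm_smul_right, K.g_smul_left]

lemma R4_add4 (X Y Z W W' : Derivation ℝ C C) :
    K.R4 X Y Z (W + W') = K.R4 X Y Z W + K.R4 X Y Z W' := by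
  unfold R4; rw [g_add_right]

lemma R4_smul4 (f : C) (X Y Z W : Derivation ℝ C C) :
    K.R4 X Y Z (f • W) = f * K.R4 X Y Z W := by
  unfold R4; rw [g_smul_right]

lemma R4_neg1 (X Y Z W : Derivation ℝ C C) : K.R4 (-X) Y Z W = - K.R4 X Y Z W := by
  have := K.R4_smul1 (-1) X Y Z W
  simpa using this

lemma R4_neg2 (X Y Z W : Derivation ℝ C C) : K.R4 X (-Y) Z W = - K.R4 X Y Z W := by
  have := K.R4_smul2 (-1) X Y Z W
  simpa using this

lemma R4_neg4 (X Y Z W : Derivation ℝ C C) : K.R4 X Y Z (-W) = - K.R4 X Y Z W := by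
  have := K.R4_smul4 (-1) X Y Z W
  simpa using this

lemma S_eq (X Y : Derivation ℝ C C) : K.S X Y = ∑ i, K.R4 (K.e i) X Y (K.e i) := rfl

lemma S_symm (X Y : Derivation ℝ C C) : K.S X Y = K.S Y X := by
  rw [S_eq, S_eq]
  refine Finset.sum_congr rfl fun i _ => ?_
  rw [R4_pair, R4_12, R4_34]; ring

lemma S_add_left (X Y Z : Derivation ℝ C C) : K.S (X + Y) Z = K.S X Z + K.S Y Z := by
  simp only [S_eq, R4_add2, Finset.sum_add_distrib]

lemma S_smul_left (f : C) (X Y : Derivation ℝ C C) : K.S (f • X) Y = f * K.S X Y := by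
  simp only [S_eq, R4_smul2, Finset.mul_sum]

lemma S_add_right (X Y Z : Derivation ℝ C C) : K.S X (Y + Z) = K.S X Y + K.S X Z := by
  simp only [S_eq, R4_add3, Finset.sum_add_distrib]

lemma S_smul_right (f : C) (X Y : Derivation ℝ C C) : K.S X (f • Y) = f * K.S X Y := by
  simp only [S_eq, R4_smul3, Finset.mul_sum]

lemma S_neg_left (X Y : Derivation ℝ C C) : K.S (-X) Y = - K.S X Y := by
  have := K.S_smul_left (-1) X Y
  simpa using this

lemma S_sub_left (X Y Z : Derivation ℝ C C) : K.S (X - Y) Z = K.S X Z - K.S Y Z := by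
  rw [sub_eq_add_neg, S_add_left, S_neg_left, sub_eq_add_neg]

/-- covariant derivative of the curvature tensor -/
def DR (E X Y Z W : Derivation ℝ C C) : C :=
  E (K.R4 X Y Z W) - K.R4 (K.nabla E X) Y Z W - K.R4 X (K.nabla E Y) Z W
    - K.R4 X Y (K.nabla E Z) W - K.R4 X Y Z (K.nabla E W)

/-- covariant derivative of the Ricci tensor -/
def DS (E Y Z : Derivation ℝ C C) : C :=
  E (K.S Y Z) - K.S (K.nabla E Y) Z - K.S Y (K.nabla E Z)

lemma DS_symm (E Y Z : Derivation ℝ C C) : K.DS E Y Z = K.DS E Z Y := by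
  unfold DS
  rw [S_symm K Y Z, S_symm K (K.nabla E Y), S_symm K Y (K.nabla E Z)]; ring

lemma DR_12 (E X Y Z W : Derivation ℝ C C) : K.DR E X Y Z W = - K.DR E Y X Z W := by
  unfold DR
  rw [R4_12 K X Y, R4_12 K (K.nabla E X) Y, R4_12 K X (K.nabla E Y), R4_12 K X Y, R4_12 K X Y,
    map_neg]; ring

lemma DR_34 (E X Y Z W : Derivation ℝ C C) : K.DR E X Y Z W = - K.DR E X Y W Z := by
  unfold DR
  rw [R4_34 K X Y Z W, R4_34 K (K.nabla E X) Y, R4_34 K X (K.nabla E Y),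
    R4_34 K X Y _ W, R4_34 K X Y Z (K.nabla E W), map_neg]; ring

lemma DR_vec (E X Y Z W : Derivation ℝ C C) : K.DR E X Y Z W =
    K.g (K.nabla E (K.Rm X Y Z) - K.Rm (K.nabla E X) Y Z - K.Rm X (K.nabla E Y) Z
      - K.Rm X Y (K.nabla E Z)) W := by
  unfold DR R4
  rw [K.metric_compat]
  simp only [g_sub_left]
  ring

lemma Rm_neg_left (X Y Z : Derivation ℝ C C) : K.Rm (-X) Y Z = - K.Rm X Y Z := by
  have := K.Rm_smul_left (-1) X Y Z
  simpa using this

lemma Rm_tors (E X Y Z : Derivation ℝ C C) : K.Rm (K.nabla E X) Y Z + K.Rm Y (K.nabla X E) Z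
    = K.Rm ⁅E, X⁆ Y Z := by
  rw [Rm_antisymm K Y, ← Rm_neg_left, ← Rm_add_left, ← sub_eq_add_neg, K.torsion_free]

lemma bianchi2 (E X Y Z W : Derivation ℝ C C) :
    K.DR E X Y Z W + K.DR X Y E Z W + K.DR Y E X Z W = 0 := by
  rw [DR_vec, DR_vec, DR_vec, ← K.g_add_left, ← K.g_add_left]
  have t1 := K.Rm_tors E X Y Z
  have t2 := K.Rm_tors X Y E Z
  have t3 := K.Rm_tors Y E X Z
  have jac : K.nabla ⁅⁅E, X⁆, Y⁆ Z + K.nabla ⁅⁅X, Y⁆, E⁆ Z + K.nabla ⁅⁅Y, E⁆, X⁆ Z = 0 := by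
    rw [← K.nabla_add_left, ← K.nabla_add_left]
    have := lie_jacobi E X Y
    rw [← lie_skew E ⁅X, Y⁆, ← lie_skew X ⁅Y, E⁆, ← lie_skew Y ⁅E, X⁆] at this
    have h0 : ⁅⁅E, X⁆, Y⁆ + ⁅⁅X, Y⁆, E⁆ + ⁅⁅Y, E⁆, X⁆ = 0 := by
      rw [← neg_eq_zero, ← this]; abel
    rw [h0, nabla_zero_left]
  convert K.g_zero_left W using 2
  have key : K.nabla E (K.Rm X Y Z) - K.Rm X Y (K.nabla E Z)
      + (K.nabla X (K.Rm Y E Z) - K.Rm Y E (K.nabla X Z))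
      + (K.nabla Y (K.Rm E X Z) - K.Rm E X (K.nabla Y Z))
      - K.Rm ⁅E, X⁆ Y Z - K.Rm ⁅X, Y⁆ E Z - K.Rm ⁅Y, E⁆ X Z
      = K.nabla ⁅⁅E, X⁆, Y⁆ Z + K.nabla ⁅⁅X, Y⁆, E⁆ Z + K.nabla ⁅⁅Y, E⁆, X⁆ Z := by
    unfold Rm
    simp only [nabla_sub_right]
    abel
  rw [jac, ← t1, ← t2, ← t3] at key
  rw [← key]
  abel

lemma trace_DR (E Y Z : Derivation ℝ C C) :
    ∑ i, K.DR E (K.e i) Y Z (K.e i) = K.DS E Y Z := by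
  have h := K.trace_nabla (fun A B => K.R4 A Y Z B) (fun _ _ _ => K.R4_add1 _ _ _ _ _)
    (fun _ _ _ => K.R4_smul1 _ _ _ _ _) (fun _ _ _ => K.R4_add4 _ _ _ _ _)
    (fun _ _ _ => K.R4_smul4 _ _ _ _ _) E
  simp only [Finset.sum_add_distrib] at h
  simp only [DR, DS, S_eq, Finset.sum_sub_distrib, map_sum]
  linear_combination -h

lemma trace_DS (E : Derivation ℝ C C) : ∑ i, K.DS E (K.e i) (K.e i) = E K.r := by
  have h := K.trace_nabla K.S K.S_add_left K.S_smul_left K.S_add_right K.S_smul_right E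
  simp only [Finset.sum_add_distrib] at h
  simp only [DS, r, Finset.sum_sub_distrib, map_sum]
  linear_combination -h

lemma contr1 (E Y Z : Derivation ℝ C C) :
    K.DS E Y Z + ∑ i, K.DR (K.e i) Y E Z (K.e i) - K.DS Y E Z = 0 := by
  have h : ∑ i, (K.DR E (K.e i) Y Z (K.e i) + K.DR (K.e i) Y E Z (K.e i)
      - K.DR Y (K.e i) E Z (K.e i)) = 0 := by
    apply Finset.sum_eq_zero
    intro i _
    linear_combination K.bianchi2 E (K.e i) Y Z (K.e i) - K.DR_12 Y E (K.e i) Z (K.e i)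
  rw [Finset.sum_sub_distrib, Finset.sum_add_distrib, trace_DR, trace_DR] at h
  exact h

lemma contr2 (E : Derivation ℝ C C) : E K.r = 2 * ∑ i, K.DS (K.e i) E (K.e i) := by
  have h : ∑ j, (K.DS E (K.e j) (K.e j) + ∑ i, K.DR (K.e i) (K.e j) E (K.e j) (K.e i)
      - K.DS (K.e j) E (K.e j)) = 0 := Finset.sum_eq_zero fun j _ => K.contr1 E _ _
  rw [Finset.sum_sub_distrib, Finset.sum_add_distrib, trace_DS, Finset.sum_comm] at h
  have h2 : ∀ i, ∑ j, K.DR (K.e i) (K.e j) E (K.e j) (K.e i) = - K.DS (K.e i) E (K.e i) := by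
    intro i
    rw [← trace_DR, ← Finset.sum_neg_distrib]
    exact Finset.sum_congr rfl fun j _ => K.DR_34 _ _ _ _ _
  simp only [h2, Finset.sum_neg_distrib] at h
  linear_combination h

/-! ### Kenmotsu structure -/

lemma g_xi (X : Derivation ℝ C C) : K.g X K.ξ = K.η X := (K.eta_def X).symm

lemma xi_g (X : Derivation ℝ C C) : K.g K.ξ X = K.η X := by rw [K.g_symm, g_xi]

lemma eta_add (X Y : Derivation ℝ C C) : K.η (X + Y) = K.η X + K.η Y := by
  simp only [K.eta_def, K.g_add_left]

lemma eta_smul (f : C) (X : Derivation ℝ C C) : K.η (f • X) = f * K.η X := by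
  simp only [K.eta_def, K.g_smul_left]

lemma eta_neg (X : Derivation ℝ C C) : K.η (-X) = - K.η X := by
  simp only [K.eta_def, K.g_neg_left]

lemma eta_sub (X Y : Derivation ℝ C C) : K.η (X - Y) = K.η X - K.η Y := by
  simp only [K.eta_def, K.g_sub_left]

lemma D_one (X : Derivation ℝ C C) : X (1 : C) = 0 := X.map_one_eq_zero

lemma eta_nabla_xi (X : Derivation ℝ C C) : K.η (K.nabla X K.ξ) = 0 := by
  have := K.metric_compat X K.ξ K.ξ
  rw [g_xi, K.eta_xi, D_one, g_xi, xi_g] at this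
  apply two_cancel
  linear_combination -this

lemma eta_phi_aux (X : Derivation ℝ C C) : K.η (K.φ X) = K.η (K.φ K.ξ) * K.η X := by
  have h1 := K.phi_phi (K.φ X)
  rw [K.phi_phi X, phi_add, phi_neg, phi_smul] at h1
  have h2 := congrArg K.η h1
  simp only [eta_add, eta_neg, eta_smul, K.eta_xi] at h2
  linear_combination -h2

lemma phi_xi_aux : K.φ K.ξ = K.η (K.φ K.ξ) • K.ξ := by
  have h1 := K.phi_phi (K.φ K.ξ)
  rw [K.phi_phi K.ξ, K.eta_xi, one_smul, neg_add_cancel, phi_zero] at h1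
  rw [eq_comm, neg_add_eq_zero] at h1
  exact h1

lemma a_sq : K.η (K.φ K.ξ) * K.η (K.φ K.ξ) = 0 := by
  have h := K.compat_phi K.ξ K.ξ
  rw [phi_xi_aux, K.g_smul_left, g_smul_right, g_xi, K.eta_xi] at h
  linear_combination h

lemma phi_skew_aux (X Y : Derivation ℝ C C) :
    K.g X (K.φ Y) + K.g (K.φ X) Y = 2 * K.η (K.φ K.ξ) * K.η X * K.η Y := by
  have h := K.compat_phi X (K.φ Y)
  rw [K.phi_phi, g_add_right, g_neg_right, g_smul_right, g_xi, eta_phi_aux K X,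
    eta_phi_aux K Y] at h
  linear_combination -h

lemma nabla_xi_aux (X : Derivation ℝ C C) :
    X (K.η (K.φ K.ξ)) = 0 ∧
    K.nabla X K.ξ = X - K.η X • K.ξ - K.η (K.φ K.ξ) • K.φ X := by
  have h := K.kenmotsu X K.ξ
  rw [phi_xi_aux, K.nabla_leibniz, g_xi, K.eta_xi, one_smul, eta_phi_aux K X] at h
  set a := K.η (K.φ K.ξ) with ha
  set W := K.nabla X K.ξ with hW
  have hη : K.η W = 0 := K.eta_nabla_xi X
  have h0 : X a = 0 := by
    have := congrArg K.η h
    simp only [eta_add, eta_sub, eta_smul, K.eta_xi, hη, eta_phi_aux K X, eta_phi_aux K W,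
      ← ha] at this
    linear_combination this
  refine ⟨h0, ?_⟩
  rw [h0, zero_smul, zero_add] at h
  have h1 : K.φ W = K.φ X + a • W - (a * K.η X) • K.ξ := by
    rw [← sub_eq_zero] at h ⊢
    rw [← neg_eq_zero, ← h]; abel
  have haa : a * a = 0 := K.a_sq
  have h2 := congrArg K.φ h1
  rw [K.phi_phi, hη, zero_smul, add_zero, phi_sub, phi_add, phi_smul, phi_smul, K.phi_phi, h1,
    phi_xi_aux, ← ha] at h2
  simp only [smul_sub, smul_add, smul_smul, haa] at h2
  have h3 : a * (a * K.η X) = 0 := by rw [← mul_assoc, haa, zero_mul]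
  have h4 : a * K.η X * a = 0 := by linear_combination K.η X * haa
  rw [h3, h4, zero_smul, zero_smul] at h2
  rw [← neg_neg W, h2]
  abel

lemma a_zero (hn : n ≠ 0) : K.η (K.φ K.ξ) = 0 := by
  have haa := K.a_sq
  have key : ∀ X Y, 2 * K.η (K.φ K.ξ) * (K.g X Y - K.η X * K.η Y) = 0 := by
    intro X Y
    have h := congrArg K.η (K.kenmotsu X Y)
    obtain ⟨h0, hW⟩ := K.nabla_xi_aux X
    have m1 := K.metric_compat X (K.φ Y) K.ξ
    have m2 := K.metric_compat X Y K.ξ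
    have sk := K.phi_skew_aux X Y
    have sk' := K.phi_skew_aux Y X
    have cp := K.compat_phi Y X
    rw [g_xi, g_xi, eta_phi_aux K Y, Derivation.leibniz, h0] at m1
    rw [g_xi, g_xi] at m2
    rw [hW] at m1 m2
    simp only [eta_sub, eta_smul, K.eta_xi, eta_phi_aux K X,
      eta_phi_aux K (K.nabla X Y)] at h
    simp only [g_sub_right, g_smul_right, g_xi, eta_phi_aux K Y, smul_eq_mul] at m1 m2
    rw [cp] at m1
    rw [K.g_symm Y X] at *
    rw [K.g_symm Y (K.φ X)] at *
    rw [K.g_symm (K.φ Y) X] at *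
    generalize K.η (K.φ K.ξ) = a at *
    linear_combination h + m1 - a * m2 + sk + K.g (K.φ X) Y * haa
  have hs : ∑ i, 2 * K.η (K.φ K.ξ) * (K.g (K.e i) (K.e i) - K.η (K.e i) * K.η (K.e i)) = 0 :=
    Finset.sum_eq_zero fun i _ => key _ _
  rw [← Finset.mul_sum, Finset.sum_sub_distrib, frame_dim] at hs
  have hx := K.frame_gg K.ξ K.ξ
  simp only [xi_g, K.eta_xi] at hx
  rw [hx] at hs
  have h4 : algebraMap ℝ C (1 / (4 * n)) * (4 * n) = 1 := by
    have : (4 * n : C) = algebraMap ℝ C (4 * n) := by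
      rw [map_mul, map_natCast, map_ofNat]
    rw [this, ← map_mul, one_div, inv_mul_cancel₀, map_one]
    have : (n : ℝ) ≠ 0 := by exact_mod_cast hn
    positivity
  linear_combination algebraMap ℝ C (1 / (4 * n)) * hs - K.η (K.φ K.ξ) * h4

lemma phi_xi (hn : n ≠ 0) : K.φ K.ξ = 0 := by
  rw [phi_xi_aux, K.a_zero hn, zero_smul]

lemma eta_phi (hn : n ≠ 0) (X : Derivation ℝ C C) : K.η (K.φ X) = 0 := by
  rw [eta_phi_aux, K.a_zero hn, zero_mul]

lemma phi_skew (hn : n ≠ 0) (X Y : Derivation ℝ C C) : K.g X (K.φ Y) = - K.g (K.φ X) Y := by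
  have := K.phi_skew_aux X Y
  rw [K.a_zero hn] at this
  linear_combination this

lemma nabla_xi (hn : n ≠ 0) (X : Derivation ℝ C C) : K.nabla X K.ξ = X - K.η X • K.ξ := by
  rw [(K.nabla_xi_aux X).2, K.a_zero hn, zero_smul, sub_zero]

/-- derivative of `η` -/
lemma D_eta (hn : n ≠ 0) (X Y : Derivation ℝ C C) :
    X (K.η Y) = K.η (K.nabla X Y) + K.g X Y - K.η X * K.η Y := by
  have := K.metric_compat X Y K.ξ
  rw [g_xi, g_xi, K.nabla_xi hn, g_sub_right, g_smul_right, g_xi, K.g_symm Y X] at this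
  linear_combination this

lemma D_Phi (X Y Z : Derivation ℝ C C) :
    X (K.g (K.φ Y) Z) = K.g (K.φ (K.nabla X Y)) Z + K.g (K.φ Y) (K.nabla X Z)
      + K.g (K.φ X) Y * K.η Z - K.η Y * K.g (K.φ X) Z := by
  have h := congrArg (fun A => K.g A Z) (K.kenmotsu X Y)
  simp only [g_sub_left, K.g_smul_left, xi_g] at h
  linear_combination h + K.metric_compat X (K.φ Y) Z

lemma R4_xi3 (hn : n ≠ 0) (X Y W : Derivation ℝ C C) :
    K.R4 X Y K.ξ W = K.η X * K.g Y W - K.η Y * K.g X W := by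
  unfold R4 Rm
  simp only [K.nabla_xi hn, nabla_sub_right, K.nabla_leibniz, K.D_eta hn]
  rw [← K.torsion_free X Y]
  simp only [g_sub_left, K.g_add_left, K.g_smul_left, eta_sub, xi_g]
  rw [K.g_symm Y X]
  ring

lemma R4_xi4 (hn : n ≠ 0) (X Y Z : Derivation ℝ C C) :
    K.R4 X Y Z K.ξ = K.η Y * K.g X Z - K.η X * K.g Y Z := by
  rw [R4_34, K.R4_xi3 hn]; ring

lemma R4_xi2 (hn : n ≠ 0) (Y Z W : Derivation ℝ C C) :
    K.R4 Y K.ξ Z W = K.η W * K.g Z Y - K.η Z * K.g W Y := by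
  rw [R4_pair, K.R4_xi4 hn]

lemma R4_phi (hn : n ≠ 0) (X Y Z W : Derivation ℝ C C) :
    K.R4 X Y (K.φ Z) W + K.R4 X Y Z (K.φ W) =
      K.g (K.φ Y) Z * K.g X W - K.g X Z * K.g (K.φ Y) W
      - K.g (K.φ X) Z * K.g Y W + K.g Y Z * K.g (K.φ X) W := by
  have N : ∀ A Z, K.nabla A (K.φ Z) = K.φ (K.nabla A Z) + K.g (K.φ A) Z • K.ξ - K.η Z • K.φ A := by
    intro A Z
    have := K.kenmotsu A Z
    rw [sub_eq_iff_eq_add] at this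
    rw [this]; abel
  unfold R4
  rw [K.phi_skew hn (K.Rm X Y Z) W]
  unfold Rm
  simp only [N, nabla_sub_right, K.nabla_add_right, K.nabla_leibniz, K.nabla_xi hn, K.D_eta hn,
    D_Phi, phi_sub, ← K.torsion_free X Y]
  simp only [g_sub_left, K.g_add_left, K.g_smul_left, xi_g]
  have s1 := K.phi_skew hn X Y
  rw [K.g_symm X] at s1
  rw [s1]
  ring

lemma frame_eta (F : Derivation ℝ C C → C) (ha : ∀ X Y, F (X + Y) = F X + F Y)
    (hs : ∀ (f : C) X, F (f • X) = f * F X) :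
    ∑ i, K.η (K.e i) * F (K.e i) = F K.ξ := by
  rw [← K.frame_lin F ha hs K.ξ]
  simp only [xi_g]

lemma S_xi (hn : n ≠ 0) (X : Derivation ℝ C C) : K.S X K.ξ = -(2 * (n : C)) * K.η X := by
  rw [S_eq]
  simp only [K.R4_xi3 hn, Finset.sum_sub_distrib, ← Finset.mul_sum]
  have h := K.frame_gg K.ξ X
  simp only [xi_g] at h
  rw [h, frame_dim]
  ring

lemma D_nat (X : Derivation ℝ C C) (m : ℕ) (f : C) : X ((m : C) * f) = (m : C) * X f := by
  simp [Derivation.leibniz]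

lemma Sstar_eq (hn : n ≠ 0) (X Y : Derivation ℝ C C) :
    K.Sstar X Y = K.S X Y + (2 * (n : C) - 1) * K.g X Y + K.η X * K.η Y := by
  have hM : ∑ i, K.R4 (K.e i) X (K.φ Y) (K.φ (K.e i))
      = K.S X Y + (2 * (n : C) - 1) * K.g X Y + K.η X * K.η Y := by
    have hp : ∀ i, K.R4 (K.e i) X (K.φ Y) (K.φ (K.e i)) = K.R4 (K.e i) X Y (K.e i)
        - K.g X (K.e i) * K.g Y (K.e i) - K.g (K.φ X) (K.e i) * K.g (K.φ Y) (K.e i)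
        + K.g X Y * K.g (K.e i) (K.e i) := by
      intro i
      have h := K.R4_phi hn (K.e i) X Y (K.φ (K.e i))
      rw [K.phi_phi, R4_add4, R4_neg4, R4_smul4, K.R4_xi4 hn, K.compat_phi, K.compat_phi,
        K.phi_skew hn X, K.g_symm (K.φ (K.e i)) Y, K.phi_skew hn Y] at h
      have h0 : K.g (K.e i) (K.φ (K.e i)) = 0 := by
        apply two_cancel
        have := K.phi_skew hn (K.e i) (K.e i)
        rw [K.g_symm (K.φ (K.e i))] at this
        linear_combination this
      rw [h0, K.g_symm (K.e i) Y] at h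
      linear_combination h
    simp only [hp, Finset.sum_add_distrib, Finset.sum_sub_distrib, ← Finset.mul_sum, frame_gg,
      frame_dim, ← S_eq, K.compat_phi]
    ring
  have h2 : ∑ i, K.R4 X (K.φ Y) (K.φ (K.e i)) (K.e i)
      = 2 * ∑ i, K.R4 (K.e i) X (K.φ Y) (K.φ (K.e i)) := by
    have hs := K.trace_skew (fun A B => K.R4 A X (K.φ Y) B) (fun _ _ _ => K.R4_add1 _ _ _ _ _)
      (fun _ _ _ => K.R4_smul1 _ _ _ _ _) (fun _ _ _ => K.R4_add4 _ _ _ _ _)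
      (fun _ _ _ => K.R4_smul4 _ _ _ _ _) (fun i => K.φ (K.e i)) (by
        intro i j
        have := K.phi_skew hn (K.e j) (K.e i)
        rw [K.g_symm (K.e j)] at this
        linear_combination this)

    have hq : ∀ i, K.R4 X (K.φ Y) (K.φ (K.e i)) (K.e i)
        = 2 * K.R4 (K.e i) X (K.φ Y) (K.φ (K.e i)) -
        (K.R4 (K.φ (K.e i)) X (K.φ Y) (K.e i) + K.R4 (K.e i) X (K.φ Y) (K.φ (K.e i))) := by
      intro i
      linear_combination K.R4_b X (K.φ Y) (K.φ (K.e i)) (K.e i)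
        - K.R4_pair (K.φ Y) (K.φ (K.e i)) X (K.e i) - K.R4_12 X (K.e i) (K.φ Y) (K.φ (K.e i))
    rw [Finset.sum_congr rfl (fun i _ => hq i), Finset.sum_sub_distrib, hs, sub_zero,
      ← Finset.mul_sum]
  have h3 : K.Sstar X Y = (2 : ℝ)⁻¹ • ∑ i, K.R4 X (K.φ Y) (K.φ (K.e i)) (K.e i) := rfl
  rw [h3, h2, hM]
  have h4 : algebraMap ℝ C (2⁻¹) * 2 = 1 := by
    rw [← map_ofNat (algebraMap ℝ C) 2, ← map_mul]; norm_num
  rw [Algebra.smul_def, ← mul_assoc, h4, one_mul]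

lemma DS_xi (hn : n ≠ 0) (X Z : Derivation ℝ C C) :
    K.DS X K.ξ Z = -(2 * (n : C)) * K.g X Z - K.S X Z := by
  have h : X (K.S K.ξ Z) = -(2 * (n : C)) * X (K.η Z) := by
    rw [S_symm, K.S_xi hn]
    have := X.leibniz (-(2 * (n : C))) (K.η Z)
    rw [this]
    have h0 : X (-(2 * (n : C))) = 0 := by
      have := X.map_natCast (2 * n)
      push_cast at this
      rw [map_neg, this, neg_zero]
    rw [h0]; simp
  unfold DS
  rw [h, K.D_eta hn, K.nabla_xi hn, S_sub_left, S_smul_left, S_symm K K.ξ Z,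
    S_symm K K.ξ (K.nabla X Z), K.S_xi hn, K.S_xi hn]
  ring

lemma DR_xi (hn : n ≠ 0) (X Y Z W : Derivation ℝ C C) :
    K.DR X Y K.ξ Z W = K.g X W * K.g Z Y - K.g X Z * K.g W Y - K.R4 Y X Z W := by
  unfold DR
  rw [K.nabla_xi hn, sub_eq_add_neg X, R4_add2, R4_neg2, R4_smul2]
  simp only [K.R4_xi2 hn, map_sub, Derivation.leibniz, K.D_eta hn, smul_eq_mul]
  rw [K.metric_compat X Z Y, K.metric_compat X W Y]
  ring

lemma DS_of_xi (hn : n ≠ 0) (Y Z : Derivation ℝ C C) :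
    K.DS K.ξ Y Z = -2 * K.S Y Z - 4 * (n : C) * K.g Y Z := by
  have h := K.contr1 K.ξ Y Z
  have hp : ∀ i, K.DR (K.e i) Y K.ξ Z (K.e i) = K.g Z Y * K.g (K.e i) (K.e i)
      - K.g Z (K.e i) * K.g Y (K.e i) + K.R4 (K.e i) Y Z (K.e i) := by
    intro i
    rw [K.DR_xi hn, R4_12, K.g_symm (K.e i) Z, K.g_symm (K.e i) Y]; ring
  simp only [hp, Finset.sum_add_distrib, Finset.sum_sub_distrib, ← Finset.mul_sum, frame_gg,
      frame_dim, ← S_eq, K.DS_xi hn] at h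
  rw [K.g_symm Z Y] at h
  linear_combination h

/-! ### the soliton -/

/-- the Lie derivative of the connection -/
def T (V X Y : Derivation ℝ C C) : Derivation ℝ C C :=
  ⁅V, K.nabla X Y⁆ - K.nabla ⁅V, X⁆ Y - K.nabla X ⁅V, Y⁆

lemma T_symm (V X Y : Derivation ℝ C C) : K.T V X Y = K.T V Y X := by
  unfold T
  have h1 : ∀ A B, K.nabla A B = K.nabla B A + ⁅A, B⁆ := fun A B => by
    rw [← K.torsion_free A B]; abel
  rw [h1 X Y, h1 ⁅V, X⁆ Y, h1 X ⁅V, Y⁆, lie_add, leibniz_lie V X Y]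
  abel

lemma Dh_T (V X Y Z : Derivation ℝ C C) :
    X (K.lieG V Y Z) - K.lieG V (K.nabla X Y) Z - K.lieG V Y (K.nabla X Z)
      = K.g (K.T V X Y) Z + K.g Y (K.T V X Z) := by
  unfold lieG T
  simp only [map_sub, g_sub_left, g_sub_right]
  have e1 := congrArg V (K.metric_compat X Y Z)
  have e2 := K.metric_compat ⁅V, X⁆ Y Z
  have e3 := K.metric_compat X ⁅V, Y⁆ Z
  have e4 := K.metric_compat X Y ⁅V, Z⁆
  rw [map_add] at e1
  rw [Derivation.commutator_apply] at e2
  linear_combination e1 - e2 - e3 - e4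

lemma Dh_S (hn : n ≠ 0) (V : Derivation ℝ C C) (k : C) (hk : ∀ X : Derivation ℝ C C, X k = 0)
    (h : ∀ X Y, K.lieG V X Y = -2 * K.S X Y - k * K.g X Y - 2 * (K.η X * K.η Y))
    (X Y Z : Derivation ℝ C C) :
    X (K.lieG V Y Z) - K.lieG V (K.nabla X Y) Z - K.lieG V Y (K.nabla X Z)
      = -2 * K.DS X Y Z - 2 * ((K.g X Y - K.η X * K.η Y) * K.η Z
        + K.η Y * (K.g X Z - K.η X * K.η Z)) := by
  have h2 : X (2 : C) = 0 := by simpa using X.map_natCast 2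
  simp only [h, DS, map_sub, Derivation.leibniz, hk, neg_mul, map_neg, h2, smul_eq_mul,
    K.D_eta hn, K.metric_compat X Y Z]
  ring

lemma T_xi (hn : n ≠ 0) (V : Derivation ℝ C C) (k : C) (hk : ∀ X : Derivation ℝ C C, X k = 0)
    (h : ∀ X Y, K.lieG V X Y = -2 * K.S X Y - k * K.g X Y - 2 * (K.η X * K.η Y))
    (X Z : Derivation ℝ C C) :
    K.g (K.T V X K.ξ) Z = 2 * K.S X Z + 4 * (n : C) * K.g X Z := by
  have a1 := K.Dh_T V X K.ξ Z
  have a2 := K.Dh_T V K.ξ X Z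
  have a3 := K.Dh_T V Z X K.ξ
  rw [K.Dh_S hn V k hk h] at a1 a2 a3
  rw [DS_symm K Z X] at a3
  rw [T_symm K V K.ξ X, T_symm K V K.ξ Z] at a2
  rw [T_symm K V Z X] at a3
  rw [K.g_symm K.ξ] at a1
  simp only [K.DS_xi hn, K.DS_of_xi hn, g_xi, xi_g, K.eta_xi] at a1 a2 a3
  rw [K.g_symm Z X, S_symm K Z X] at a3
  apply two_cancel
  linear_combination a3 - a1 - a2

lemma nabla_U (hn : n ≠ 0) (V : Derivation ℝ C C) (c : C) (hc : ∀ X : Derivation ℝ C C, X c = 0)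
    (h : ∀ X Y, K.lieG V X Y =
      -2 * K.S X Y - (2 * (2 * (n : C) - 1 + c)) * K.g X Y - 2 * (K.η X * K.η Y))
    (X Z : Derivation ℝ C C) :
    K.g (K.nabla X ⁅V, K.ξ⁆) Z = 2 * c * K.η X * K.η Z - K.g X ⁅V, K.ξ⁆ * K.η Z
      - K.η X * K.g ⁅V, K.ξ⁆ Z - 2 * K.S X Z - 4 * (n : C) * K.g X Z := by
  have hk : ∀ X : Derivation ℝ C C, X (2 * (2 * (n : C) - 1 + c)) = 0 := by
    intro X
    have h2 : X (2 : C) = 0 := by simpa using X.map_natCast 2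
    simp [Derivation.leibniz, hc, h2]
  have t := K.T_xi hn V _ hk h X Z
  have hx := h X K.ξ
  rw [K.S_xi hn, g_xi, K.eta_xi] at hx
  unfold lieG at hx
  rw [g_xi, g_xi] at hx
  have hl : ⁅V, K.nabla X K.ξ⁆ = ⁅V, X⁆ - V (K.η X) • K.ξ - K.η X • ⁅V, K.ξ⁆ := by
    rw [K.nabla_xi hn]
    ext a
    simp [Derivation.commutator_apply]
    ring
  unfold T at t
  rw [hl, K.nabla_xi hn] at t
  simp only [g_sub_left, K.g_smul_left, xi_g] at t
  linear_combination -t - K.η Z * hx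

lemma R4_U (hn : n ≠ 0) (U : Derivation ℝ C C) (c : C) (hc : ∀ X : Derivation ℝ C C, X c = 0)
    (hB : ∀ X Z, K.g (K.nabla X U) Z = 2 * c * K.η X * K.η Z - K.g X U * K.η Z
      - K.η X * K.g U Z - 2 * K.S X Z - 4 * (n : C) * K.g X Z) (X Y W : Derivation ℝ C C) :
    K.R4 X Y U W = 2 * c * (K.η Y * K.g X W - K.η X * K.g Y W) - K.g Y U * K.g X W
      + K.g X U * K.g Y W + (K.g Y U * K.η X - K.g X U * K.η Y) * K.η W
      - K.η Y * K.g (K.nabla X U) W + K.η X * K.g (K.nabla Y U) W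
      - 2 * (K.DS X Y W - K.DS Y X W) := by
  have key : ∀ X Y, K.g (K.nabla X (K.nabla Y U)) W =
      2 * c * ((K.η (K.nabla X Y) + K.g X Y - K.η X * K.η Y) * K.η W
        + K.η Y * (K.g X W - K.η X * K.η W))
      - (K.g (K.nabla X Y) U + K.g (K.nabla X U) Y) * K.η W
      - K.g Y U * (K.g X W - K.η X * K.η W)
      - (K.η (K.nabla X Y) + K.g X Y - K.η X * K.η Y) * K.g U W
      - K.η Y * K.g (K.nabla X U) W
      - 2 * (K.DS X Y W + K.S (K.nabla X Y) W) - 4 * (n : C) * K.g (K.nabla X Y) W := by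
    intro X Y
    have h2 : X (2 : C) = 0 := by simpa using X.map_natCast 2
    have h4 : X (4 : C) = 0 := by simpa using X.map_natCast 4
    have m := K.metric_compat X (K.nabla Y U) W
    have mYU := K.metric_compat X Y U
    have mUW := K.metric_compat X U W
    have mYW := K.metric_compat X Y W
    rw [K.g_symm Y (K.nabla X U)] at mYU
    have b1 := congrArg X (hB Y W)
    simp only [map_sub, Derivation.leibniz, hc, h2, h4, Derivation.map_natCast, smul_eq_mul,
      K.D_eta hn, mYU, mUW, mYW] at b1
    rw [hB Y (K.nabla X W)] at m
    unfold DS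
    linear_combination b1 - m
  have e : K.R4 X Y U W = K.g (K.nabla X (K.nabla Y U)) W - K.g (K.nabla Y (K.nabla X U)) W
      - (K.g (K.nabla (K.nabla X Y) U) W - K.g (K.nabla (K.nabla Y X) U) W) := by
    unfold R4 Rm
    rw [← K.torsion_free X Y, nabla_sub_left]
    simp only [g_sub_left]
  rw [e, key, key, hB (K.nabla X Y), hB (K.nabla Y X)]
  have s1 := hB X Y
  have s2 := hB Y X
  rw [K.g_symm Y X, S_symm K Y X] at s2
  rw [K.g_symm U Y] at s1
  rw [K.g_symm U X] at s2
  rw [K.g_symm Y X]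
  linear_combination (-K.η W) * s1 + K.η W * s2

lemma S_U (hn : n ≠ 0) (U : Derivation ℝ C C) (c : C) (hc : ∀ X : Derivation ℝ C C, X c = 0)
    (hU : K.η U = c)
    (hB : ∀ X Z, K.g (K.nabla X U) Z = 2 * c * K.η X * K.η Z - K.g X U * K.η Z
      - K.η X * K.g U Z - 2 * K.S X Z - 4 * (n : C) * K.g X Z) (Y : Derivation ℝ C C) :
    K.S Y U = 4 * (n : C) * c * K.η Y - 2 * (n : C) * K.g Y U
      + K.η Y * (2 * K.r + 4 * (n : C) * (2 * (n : C) + 1)) + Y K.r := by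
  have hp : ∀ i, K.R4 (K.e i) Y U (K.e i) =
      2 * c * K.η Y * K.g (K.e i) (K.e i) - 2 * c * (K.η (K.e i) * K.g Y (K.e i))
      - K.g Y U * K.g (K.e i) (K.e i) + K.g U (K.e i) * K.g Y (K.e i)
      + K.g Y U * (K.η (K.e i) * K.η (K.e i)) - K.η Y * (K.η (K.e i) * K.g U (K.e i))
      - K.η Y * (2 * c * (K.η (K.e i) * K.η (K.e i)) - 2 * (K.η (K.e i) * K.g U (K.e i))
        - 2 * K.S (K.e i) (K.e i) - 4 * (n : C) * K.g (K.e i) (K.e i))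
      + K.η (K.e i) * K.g (K.nabla Y U) (K.e i)
      - 2 * K.DS (K.e i) Y (K.e i) + 2 * K.DS Y (K.e i) (K.e i) := by
    intro i
    rw [K.R4_U hn U c hc hB, hB (K.e i) (K.e i), K.g_symm (K.e i) U]
    ring
  have fe : ∀ A, ∑ i, K.η (K.e i) * K.g A (K.e i) = K.η A := by
    intro A
    have := K.frame_gg K.ξ A
    simp only [xi_g] at this
    exact this
  have fx := K.frame_gg K.ξ K.ξ
  simp only [xi_g, K.eta_xi] at fx
  have hr : ∑ i, K.S (K.e i) (K.e i) = K.r := rfl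
  have c2 := K.contr2 Y
  have hby := hB Y K.ξ
  rw [g_xi, g_xi, K.S_xi hn, g_xi, K.eta_xi, hU] at hby
  rw [S_eq]
  simp only [hp, Finset.sum_add_distrib, Finset.sum_sub_distrib, ← Finset.mul_sum, frame_gg,
      frame_dim, fe, fx, hr, trace_DS, hU, hby]
  rw [K.g_symm U Y]
  linear_combination c2

lemma S_zero_dim (K : KenmotsuManifold 0 C) (X Y : Derivation ℝ C C) : K.S X Y = 0 := by
  rw [S_eq]
  refine Finset.sum_eq_zero fun i _ => ?_
  rw [← K.frame_lin (fun A => K.R4 (K.e i) A Y (K.e i)) (fun _ _ => K.R4_add2 _ _ _ _ _)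
    (fun _ _ => K.R4_smul2 _ _ _ _ _) X]
  refine Finset.sum_eq_zero fun j _ => ?_
  have hij : j = i := Fin.ext (by omega)
  subst hij
  have : K.R4 (K.e j) (K.e j) Y (K.e j) = 0 := by
    apply two_cancel
    linear_combination K.R4_12 (K.e j) (K.e j) Y (K.e j)
  simp only [this, mul_zero]

end helpers

end KenmotsuManifold

open KenmotsuManifold in
/-- If a Kenmotsu manifold of dimension `2n+1` admits a `*`-Ricci
soliton with potential vector field `V`, then
`(£_V S)(X, ξ) = -X(r) + ξ(r) η(X)` for all vector fields `X`. -/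
theorem stmt4 {n : ℕ} {C : Type*} [CommRing C] [Algebra ℝ C]
    (K : KenmotsuManifold n C) (V : Derivation ℝ C C) (l : ℝ)
    (h : K.IsStarRicciSoliton V l) (X : Derivation ℝ C C) :
    K.lieS V X K.ξ = -(X K.r) + K.ξ K.r * K.η X := by
  by_cases hn : n = 0
  · subst hn
    have hr : K.r = 0 := Finset.sum_eq_zero fun i _ => K.S_zero_dim _ _
    unfold lieS
    simp [S_zero_dim, hr]
  · set c : C := algebraMap ℝ C l with hcdef
    have hc : ∀ X : Derivation ℝ C C, X c = 0 := fun X => X.map_algebraMap l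
    have hh : ∀ X Y, K.lieG V X Y =
        -2 * K.S X Y - (2 * (2 * (n : C) - 1 + c)) * K.g X Y - 2 * (K.η X * K.η Y) := by
      intro X Y
      have := h X Y
      rw [K.Sstar_eq hn, Algebra.smul_def, map_mul, map_ofNat, ← hcdef] at this
      linear_combination this
    have hU : K.η ⁅V, K.ξ⁆ = c := by
      have := hh K.ξ K.ξ
      unfold lieG at this
      rw [K.S_xi hn, g_xi, K.eta_xi, g_xi, xi_g, D_one] at this
      apply two_cancel
      linear_combination -this
    have hs := K.S_U hn ⁅V, K.ξ⁆ c hc hU (K.nabla_U hn V c hc hh)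
    have hX := hs X
    have hxi := K.trace_DS K.ξ
    simp only [K.DS_of_xi hn, Finset.sum_sub_distrib, ← Finset.mul_sum, frame_dim] at hxi
    have hr : ∑ i, K.S (K.e i) (K.e i) = K.r := rfl
    rw [hr] at hxi
    have hx := hh X K.ξ
    unfold lieG at hx
    rw [K.S_xi hn, g_xi, K.eta_xi, g_xi] at hx
    have hV : V (K.S X K.ξ) = -(2 * (n : C)) * V (K.η X) := by
      rw [K.S_xi hn]
      have h2 : V (2 : C) = 0 := by simpa using V.map_natCast 2
      simp [Derivation.leibniz, h2]
      try ring
    unfold lieS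
    rw [hV, K.S_xi hn]
    linear_combination -hX - 2 * (n : C) * hx + K.η X * hxi
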